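/- For every n ∈ ℕ and every column index 0 ≤ m ≤ 2ℓ, the column sums of P_n evaluated at the point (q+q⁻¹)/2 equal one: Σ_{k=0}^{2ℓ} P_n((q+q⁻¹)/2)_{k,m} = 1. -/

import Mathlib

open Finset Polynomial MeasureTheory Matrix
open scoped BigOperators ComplexOrder

noncomputable section

/-- q-shifted factorial `(a;p)_n`. -/
def qp (a p : ℂ) (n : ℕ) : ℂ := ∏ j ∈ Finset.range n, (1 - a * p ^ j)

/-- q-Racah polynomial `R_n(μ(x);α,β,γ,δ;p)`. -/
def qRacah (p α β γ δ : ℂ) (n x : ℕ) : ℂ :=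
  ∑ k ∈ Finset.range (min n x + 1),
    qp (p ^ (-(n : ℤ))) p k * qp (α * β * p ^ (n + 1)) p k *
        qp (p ^ (-(x : ℤ))) p k * qp (γ * δ * p ^ (x + 1)) p k /
      (qp (α * p) p k * qp (β * δ * p) p k * qp (γ * p) p k * qp p p k) * p ^ k

/-- `IsUltra C` says that for each base `p`, parameter `β` and degree `n`, `C p β n` is
the continuous q-ultraspherical polynomial: it has degree at most `n` and its values at
`(z+z⁻¹)/2` are given by the symmetric Laurent sum. -/
def IsUltra (C : ℂ → ℂ → ℕ → Polynomial ℂ) : Prop :=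
  ∀ (p β : ℂ) (n : ℕ),
    (C p β n).degree ≤ (n : ℕ) ∧
      ∀ z : ℂ, z ≠ 0 →
        (C p β n).eval ((z + z⁻¹) / 2) =
          ∑ r ∈ Finset.range (n + 1),
            qp β p r * qp β p (n - r) / (qp p p r * qp p p (n - r)) * z ^ ((n : ℤ) - 2 * r)

/-- The matrix-valued polynomial `P_n` (entries in `Polynomial ℂ`); here `L = 2ℓ`. -/
def Pm (q : ℂ) (L : ℕ) (C : ℂ → ℂ → ℕ → Polynomial ℂ) (n : ℕ) :
    Matrix (Fin (L + 1)) (Fin (L + 1)) (Polynomial ℂ) :=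
  Matrix.of fun i j =>
    ∑ k ∈ Finset.Icc (i : ℕ) (min L (n + (j : ℕ))),
      Polynomial.C
          ((-1 : ℂ) ^ k *
            q ^ ((n : ℤ) + (2 * (k : ℤ) + 1) * ((k : ℤ) - ((i : ℕ) : ℤ)) +
                ((j : ℕ) : ℤ) * (2 * (k : ℤ) + 1) + 2 * (k : ℤ) * ((L : ℤ) + (n : ℤ) + 1) -
                (k : ℤ) ^ 2) *
            (qp (q ^ 2) (q ^ 2) k * qp (q ^ 2) (q ^ 2) (k + (i : ℕ)) /
              (qp (q ^ 2) (q ^ 2) (2 * k) * qp (q ^ 2) (q ^ 2) (i : ℕ))) *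
            (qp (q ^ (-(2 * (L : ℤ)))) (q ^ 2) k *
                qp (q ^ (-(2 * ((j : ℕ) : ℤ) + 2 * (n : ℤ)))) (q ^ 2) k /
              (qp (q ^ 2) (q ^ 2) k * qp (q ^ (2 * (L : ℤ) + 4)) (q ^ 2) k)) *
            (qp (q ^ 2) (q ^ 2) (n + (j : ℕ) - k) /
              qp (q ^ (4 * (k : ℤ) + 4)) (q ^ 2) (n + (j : ℕ) - k)) *
            qRacah (q ^ 2) 1 1 (q ^ (-(2 * (n : ℤ) + 2 * ((j : ℕ) : ℤ) + 2)))
              (q ^ (-(2 * (L : ℤ) + 2))) k (j : ℕ)) *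
        (C (q ^ 2) (q ^ (-(2 * (k : ℤ)))) (k - (i : ℕ)) *
          C (q ^ 2) (q ^ (2 * (k : ℤ) + 2)) (n + (j : ℕ) - k))

/-- Evaluation of the matrix-valued polynomial `P_n` at a point. -/
def evP (q : ℂ) (L : ℕ) (C : ℂ → ℂ → ℕ → Polynomial ℂ) (n : ℕ) (x : ℂ) :
    Matrix (Fin (L + 1)) (Fin (L + 1)) ℂ :=
  (Pm q L C n).map (Polynomial.eval x)

/-- The coefficients `α_t(m,n)` of the weight. -/
def alphaC (q : ℂ) (L m n t : ℕ) : ℂ :=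
  q ^ (2 * (n : ℤ) * ((L : ℤ) + 1) - (n : ℤ) ^ 2 - (2 * (L : ℤ) + 3) * (t : ℤ) + (t : ℤ) ^ 2 -
      (L : ℤ) + (m : ℤ)) *
    ((1 - q ^ (2 * (L : ℤ) + 2)) / (1 - q ^ (2 * (m : ℤ) + 2))) *
    (qp (q ^ 2) (q ^ 2) (L - n) * qp (q ^ 2) (q ^ 2) n / qp (q ^ 2) (q ^ 2) L) *
    ((-1 : ℂ) ^ ((m : ℤ) - (t : ℤ)) * qp (q ^ (2 * (m : ℤ) - 2 * (L : ℤ))) (q ^ 2) (n - t) /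
      qp (q ^ (2 * (m : ℤ) + 4)) (q ^ 2) (n - t)) *
    (qp (q ^ (2 * (L : ℤ) + 4 - 2 * (t : ℤ))) (q ^ 2) t / qp (q ^ 2) (q ^ 2) t)

/-- The matrix weight `W(x)`. -/
def Wm (q : ℂ) (L : ℕ) (x : ℂ) : Matrix (Fin (L + 1)) (Fin (L + 1)) ℂ :=
  Matrix.of fun i j =>
    ∑ t ∈ Finset.range (max (i : ℕ) (j : ℕ) + 1),
      alphaC q L (min (i : ℕ) (j : ℕ)) (max (i : ℕ) (j : ℕ)) t *
        (Polynomial.Chebyshev.U ℂ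
            ((min (i : ℕ) (j : ℕ) : ℤ) + (max (i : ℕ) (j : ℕ) : ℤ) - 2 * (t : ℤ))).eval x

/-- The antidiagonal involution `J`. -/
def Jm (L : ℕ) : Matrix (Fin (L + 1)) (Fin (L + 1)) ℂ :=
  Matrix.of fun i j => if (i : ℕ) + (j : ℕ) = L then 1 else 0

/-- The diagonal leading-coefficient matrix `Γ_n`. -/
def Gam (q : ℂ) (L n : ℕ) : Matrix (Fin (L + 1)) (Fin (L + 1)) ℂ :=
  Matrix.diagonal fun i =>
    2 ^ n * q ^ n * qp (q ^ (2 * ((i : ℕ) : ℤ) + 2)) (q ^ 2) n *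
        qp (q ^ (2 * (L : ℤ) - 2 * ((i : ℕ) : ℤ) + 2)) (q ^ 2) n /
      (qp (q ^ 2) (q ^ 2) n * qp (q ^ (2 * (L : ℤ) + 4)) (q ^ 2) n)

/-- The squared-norm matrix `G_m`. -/
def Gmat (q : ℂ) (L m : ℕ) : Matrix (Fin (L + 1)) (Fin (L + 1)) ℂ :=
  Matrix.diagonal fun i =>
    q ^ (2 * (m : ℤ) - (L : ℤ)) * (1 - q ^ (2 * (L : ℤ) + 2)) ^ 2 /
      ((1 - q ^ (2 * (m : ℤ) + 2 * ((i : ℕ) : ℤ) + 2)) *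
        (1 - q ^ (2 * (L : ℤ) - 2 * ((i : ℕ) : ℤ) + 2 * (m : ℤ) + 2)))

/-- The unipotent lower triangular matrix `L(x)` of the LDU decomposition. -/
def Lm (q : ℂ) (L : ℕ) (C : ℂ → ℂ → ℕ → Polynomial ℂ) (x : ℂ) :
    Matrix (Fin (L + 1)) (Fin (L + 1)) ℂ :=
  Matrix.of fun m k =>
    if (k : ℕ) ≤ (m : ℕ) then
      q ^ (((m : ℕ) : ℤ) - ((k : ℕ) : ℤ)) * qp (q ^ 2) (q ^ 2) (m : ℕ) *
          qp (q ^ 2) (q ^ 2) (2 * (k : ℕ) + 1) /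
          (qp (q ^ 2) (q ^ 2) ((m : ℕ) + (k : ℕ) + 1) * qp (q ^ 2) (q ^ 2) (k : ℕ)) *
        (C (q ^ 2) (q ^ (2 * (k : ℕ) + 2)) ((m : ℕ) - (k : ℕ))).eval x
    else 0

/-- The claimed inverse of `L(x)`. -/
def Linv (q : ℂ) (L : ℕ) (C : ℂ → ℂ → ℕ → Polynomial ℂ) (x : ℂ) :
    Matrix (Fin (L + 1)) (Fin (L + 1)) ℂ :=
  Matrix.of fun k n =>
    if (n : ℕ) ≤ (k : ℕ) then
      q ^ ((2 * ((k : ℕ) : ℤ) + 1) * (((k : ℕ) : ℤ) - ((n : ℕ) : ℤ))) *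
          qp (q ^ 2) (q ^ 2) (k : ℕ) * qp (q ^ 2) (q ^ 2) ((k : ℕ) + (n : ℕ)) /
          (qp (q ^ 2) (q ^ 2) (2 * (k : ℕ)) * qp (q ^ 2) (q ^ 2) (n : ℕ)) *
        (C (q ^ 2) (q ^ (-(2 * ((k : ℕ) : ℤ)))) ((k : ℕ) - (n : ℕ))).eval x
    else 0

/-- The constants `c_k(ℓ)`. -/
def ckC (q : ℂ) (L k : ℕ) : ℂ :=
  q ^ (-(L : ℤ)) / 4 * (1 - q ^ (4 * k + 2)) * qp (q ^ 2) (q ^ 2) (L + k + 1) *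
      qp (q ^ 2) (q ^ 2) (L - k) * qp (q ^ 2) (q ^ 2) k ^ 4 /
    (qp (q ^ 2) (q ^ 2) (2 * k + 1) ^ 2 * qp (q ^ 2) (q ^ 2) L ^ 2)

/-- The diagonal part `T(x)` of the LDU decomposition. -/
def Tm (q : ℂ) (L : ℕ) (x : ℂ) : Matrix (Fin (L + 1)) (Fin (L + 1)) ℂ :=
  Matrix.diagonal fun k =>
    ckC q L (k : ℕ) *
      (4 * ∏ j ∈ Finset.Icc 1 (k : ℕ), (1 - 2 * (2 * x ^ 2 - 1) * q ^ (2 * j) + q ^ (4 * j)))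

/-- The coefficient matrix `M₁(z)` of the q-difference operator `D₁`. -/
def M1f (q : ℂ) (L : ℕ) (z : ℂ) : Matrix (Fin (L + 1)) (Fin (L + 1)) ℂ :=
  Matrix.of fun i j =>
    if (j : ℕ) = (i : ℕ) + 1 then
      -(q ^ (1 - ((i : ℕ) : ℤ)) * (1 - q ^ (2 * (i : ℕ) + 2)) / (1 - q ^ 2) ^ 2 *
        (z / (1 - z ^ 2)))
    else if (j : ℕ) = (i : ℕ) then
      q ^ (1 - ((i : ℕ) : ℤ)) / (1 - q ^ 2) ^ 2 *
        ((1 - q ^ (2 * (i : ℕ) + 2) * z ^ 2) / (1 - z ^ 2))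
    else 0

/-- `M₂(z) = J M₁(z) J`. -/
def M2f (q : ℂ) (L : ℕ) (z : ℂ) : Matrix (Fin (L + 1)) (Fin (L + 1)) ℂ :=
  Jm L * M1f q L z * Jm L

/-- The eigenvalue matrix `Λ_n(1)`. -/
def Lam1 (q : ℂ) (L n : ℕ) : Matrix (Fin (L + 1)) (Fin (L + 1)) ℂ :=
  Matrix.diagonal fun j =>
    (q ^ (-((j : ℕ) : ℤ) - (n : ℤ) - 1) + q ^ (((j : ℕ) : ℤ) + (n : ℤ) + 1)) / (q⁻¹ - q) ^ 2

/-- The eigenvalue matrix `Λ_n(2) = J Λ_n(1) J`. -/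
def Lam2 (q : ℂ) (L n : ℕ) : Matrix (Fin (L + 1)) (Fin (L + 1)) ℂ :=
  Jm L * Lam1 q L n * Jm L

/-- The diagonal coefficient matrix `K₁(z)` of the decoupled operator. -/
def K1f (q : ℂ) (L : ℕ) (z : ℂ) : Matrix (Fin (L + 1)) (Fin (L + 1)) ℂ :=
  Matrix.diagonal fun i =>
    q ^ (1 - ((i : ℕ) : ℤ)) / (1 - q ^ 2) ^ 2 *
      ((1 - q ^ (2 * (i : ℕ) + 2) * z ^ 2) / (1 - z ^ 2))

/-- The symmetric Laurent polynomial `Ĉ_k(z;β|p)`. -/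
def Chat (p β : ℂ) (k : ℕ) (z : ℂ) : ℂ :=
  ∑ r ∈ Finset.range (k + 1),
    qp β p r * qp β p (k - r) / (qp p p r * qp p p (k - r)) * z ^ ((k : ℤ) - 2 * (r : ℤ))

/-- The matrix polynomials `R_n(x) = L(x)ᵀ P_n(x) Γ_n⁻¹`. -/
def Rmat (q : ℂ) (L : ℕ) (C : ℂ → ℂ → ℕ → Polynomial ℂ) (n : ℕ) (x : ℂ) :
    Matrix (Fin (L + 1)) (Fin (L + 1)) ℂ :=
  (Lm q L C x)ᵀ * evP q L C n x * (Gam q L n)⁻¹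



theorem qp_succ' (a p : ℂ) (n : ℕ) : qp a p (n + 1) = qp a p n * (1 - a * p ^ n) := by
  unfold qp; rw [Finset.prod_range_succ]

theorem qp_succ_left (a p : ℂ) (n : ℕ) : qp a p (n + 1) = (1 - a) * qp (a * p) p n := by
  unfold qp; rw [Finset.prod_range_succ', mul_comm]
  congr 1
  · simp
  · apply Finset.prod_congr rfl; intros; ring

theorem qp_add (a p : ℂ) (n m : ℕ) : qp a p (n + m) = qp a p n * qp (a * p ^ n) p m := by
  unfold qp; rw [Finset.prod_range_add]
  congr 1
  apply Finset.prod_congr rfl; intros; ring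

theorem qp_ne (p : ℂ) (hp : ∀ j : ℕ, p ^ (j + 1) ≠ 1) (n : ℕ) : qp p p n ≠ 0 := by
  unfold qp
  rw [Finset.prod_ne_zero_iff]
  intro j _ h
  apply hp j
  rw [pow_succ']
  linear_combination -h

theorem qp_zero_of (p : ℂ) (hp0 : p ≠ 0) (k r : ℕ) (h : k < r) : qp ((p⁻¹) ^ k) p r = 0 := by
  unfold qp
  apply Finset.prod_eq_zero (Finset.mem_range.2 h)
  rw [← mul_pow, inv_mul_cancel₀ hp0]; simp

theorem qbin (p : ℂ) (hp0 : p ≠ 0) (hp : ∀ j : ℕ, p ^ (j + 1) ≠ 1) (w : ℂ) (k : ℕ) :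
    ∑ r ∈ Finset.range (k + 1), qp ((p⁻¹) ^ k) p r / qp p p r * w ^ r =
      ∏ j ∈ Finset.range k, (1 - (p⁻¹) ^ (j + 1) * w) := by
  induction k with
  | zero => simp [qp]
  | succ k ih =>
    rw [Finset.prod_range_succ, ← ih]
    have e : ∀ r, qp ((p⁻¹) ^ (k + 1)) p (r + 1) / qp p p (r + 1) =
        qp ((p⁻¹) ^ k) p (r + 1) / qp p p (r + 1)
          - (p⁻¹) ^ (k + 1) * (qp ((p⁻¹) ^ k) p r / qp p p r) := by
      intro r
      have h1 := qp_ne p hp r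
      have h2 := qp_ne p hp (r + 1)
      rw [qp_succ_left ((p⁻¹) ^ (k + 1)), qp_succ' ((p⁻¹) ^ k)]
      have h3 : (p⁻¹) ^ (k + 1) * p = (p⁻¹) ^ k := by
        rw [pow_succ, mul_assoc, inv_mul_cancel₀ hp0, mul_one]
      rw [h3]
      rw [qp_succ'] at h2 ⊢
      have h4 := right_ne_zero_of_mul h2
      have h5 : (p⁻¹) ^ k = (p⁻¹) ^ (k + 1) * p := h3.symm
      generalize qp ((p⁻¹) ^ k) p r = A at *
      rw [h5]
      generalize (p⁻¹) ^ (k + 1) = B at *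
      field_simp
      ring
    rw [Finset.sum_range_succ']
    simp only [e, sub_mul, Finset.sum_sub_distrib]
    have z : ∑ r ∈ Finset.range (k + 1), qp ((p⁻¹) ^ k) p r / qp p p r * w ^ r =
        ∑ r ∈ Finset.range (k + 1), qp ((p⁻¹) ^ k) p (r + 1) / qp p p (r + 1) * w ^ (r + 1) + 1 := by
      have := Finset.sum_range_succ' (fun r => qp ((p⁻¹) ^ k) p r / qp p p r * w ^ r) (k + 1)
      rw [Finset.sum_range_succ, qp_zero_of p hp0 k (k + 1) (by omega)] at this
      simpa [qp] using this
    rw [mul_sub, mul_one]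
    have : ∑ x ∈ Finset.range (k + 1),
        (p⁻¹) ^ (k + 1) * (qp ((p⁻¹) ^ k) p x / qp p p x) * w ^ (x + 1) =
        (∑ r ∈ Finset.range (k + 1), qp ((p⁻¹) ^ k) p r / qp p p r * w ^ r) *
          ((p⁻¹) ^ (k + 1) * w) := by
      rw [Finset.sum_mul]
      apply Finset.sum_congr rfl; intros; ring
    rw [this]
    have h0 : ∀ a : ℂ, qp a p 0 = 1 := by intro a; simp [qp]
    simp only [h0]
    linear_combination -z

theorem qbin_zero (p : ℂ) (hp0 : p ≠ 0) (hp : ∀ j : ℕ, p ^ (j + 1) ≠ 1) (k d : ℕ) (hd : d < k) :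
    ∑ r ∈ Finset.range (k + 1), qp ((p⁻¹) ^ k) p r / qp p p r * (p ^ (d + 1)) ^ r = 0 := by
  rw [qbin p hp0 hp]
  apply Finset.prod_eq_zero (Finset.mem_range.2 hd)
  rw [← mul_pow, inv_mul_cancel₀ hp0]; simp

theorem dbl (p : ℂ) (hp0 : p ≠ 0) (hp : ∀ j : ℕ, p ^ (j + 1) ≠ 1) (k : ℕ) (hk : 0 < k)
    (f : Polynomial ℂ) (hf : f.natDegree < k + 1) :
    ∑ r ∈ Finset.range (k + 1), ∑ u ∈ Finset.range (k + 1),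
      (qp ((p⁻¹) ^ k) p r / qp p p r * (p ^ k) ^ r) *
      (qp ((p⁻¹) ^ k) p u / qp p p u * (p ^ (k + 1)) ^ u) * f.eval ((p⁻¹) ^ (r + u)) = 0 := by
  simp only [Polynomial.eval_eq_sum_range' hf, Finset.mul_sum]
  have : ∀ d ∈ Finset.range (k + 1), ∑ r ∈ Finset.range (k + 1), ∑ u ∈ Finset.range (k + 1),
      (qp ((p⁻¹) ^ k) p r / qp p p r * (p ^ k) ^ r) *
      (qp ((p⁻¹) ^ k) p u / qp p p u * (p ^ (k + 1)) ^ u) *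
        (f.coeff d * ((p⁻¹) ^ (r + u)) ^ d) = 0 := by
    intro d hd
    have hd : d ≤ k := by simpa [Nat.lt_succ_iff] using hd
    have hx : ∀ e, d ≤ e → ∀ r : ℕ, (p ^ e) ^ r * ((p⁻¹) ^ r) ^ d = (p ^ (e - d)) ^ r := by
      intro e he r
      obtain ⟨c, rfl⟩ := Nat.exists_eq_add_of_le he
      rw [Nat.add_sub_cancel_left, pow_add, mul_pow, ← pow_mul, ← pow_mul p⁻¹, mul_comm r d,
        mul_right_comm, ← mul_pow, mul_inv_cancel₀ hp0, one_pow, one_mul]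
    have : ∑ r ∈ Finset.range (k + 1), ∑ u ∈ Finset.range (k + 1),
      (qp ((p⁻¹) ^ k) p r / qp p p r * (p ^ k) ^ r) *
      (qp ((p⁻¹) ^ k) p u / qp p p u * (p ^ (k + 1)) ^ u) *
        (f.coeff d * ((p⁻¹) ^ (r + u)) ^ d) =
        f.coeff d * ((∑ r ∈ Finset.range (k + 1), qp ((p⁻¹) ^ k) p r / qp p p r * (p ^ (k - d)) ^ r) *
        (∑ r ∈ Finset.range (k + 1), qp ((p⁻¹) ^ k) p r / qp p p r * (p ^ (k + 1 - d)) ^ r)) := by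
      rw [Finset.sum_mul_sum]
      simp only [Finset.mul_sum]
      apply Finset.sum_congr rfl; intro r _
      apply Finset.sum_congr rfl; intro u _
      rw [← hx k hd, ← hx (k + 1) (by omega), pow_add, mul_pow]
      ring
    rw [this]
    rcases Nat.lt_or_ge d k with h | h
    · have := qbin_zero p hp0 hp k (k - d - 1)  (by omega)
      rcases Nat.eq_zero_or_pos d with h0 | h0
      · rw [show k - d - 1 + 1 = k - d by omega] at this
        rw [this]; ring
      · rw [show k - d - 1 + 1 = k - d by omega] at this
        rw [this]; ring
    · have := qbin_zero p hp0 hp k 0 hk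
      rw [show k + 1 - d = 0 + 1 by omega, this]; ring
  rw [Finset.sum_congr rfl (fun r _ => Finset.sum_comm), Finset.sum_comm]
  exact Finset.sum_eq_zero this

theorem key (q : ℂ) (hq0 : q ≠ 0) (hp : ∀ j : ℕ, (q ^ 2) ^ (j + 1) ≠ 1)
    (C : ℂ → ℂ → ℕ → Polynomial ℂ) (hC : IsUltra C) (k : ℕ) (hk : 0 < k) :
    ∑ i ∈ Finset.range (k + 1), q ^ ((2 * (k : ℤ) + 1) * ((k : ℤ) - (i : ℤ))) *
      (qp (q ^ 2) (q ^ 2) (k + i) / qp (q ^ 2) (q ^ 2) i) *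
      (C (q ^ 2) (q ^ (-(2 * (k : ℤ)))) (k - i)).eval ((q + q⁻¹) / 2) = 0 := by
  have hp0 : q ^ 2 ≠ 0 := pow_ne_zero _ hq0
  let f : Polynomial ℂ := ∏ j ∈ Finset.range k, (1 - Polynomial.C ((q ^ 2) ^ (k + 1 + j)) * Polynomial.X)
  have hf : f.natDegree < k + 1 := by
    refine Nat.lt_succ_of_le ((Polynomial.natDegree_prod_le _ _).trans ?_)
    refine (Finset.sum_le_card_nsmul _ _ 1 ?_).trans (by simp)
    intro j _
    compute_degree
  have hfe : ∀ x, f.eval x = ∏ j ∈ Finset.range k, (1 - (q ^ 2) ^ (k + 1 + j) * x) := by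
    intro x; simp [f, Polynomial.eval_prod]
  rw [← dbl (q ^ 2) hp0 hp k hk f hf, ← Finset.sum_range_reflect]
  have hb : q ^ (-(2 * (k : ℤ))) = ((q ^ 2)⁻¹) ^ k := by
    rw [_root_.zpow_neg, _root_.zpow_mul, zpow_natCast, inv_pow]; norm_cast
  have hq2 : ∀ s, s ≤ k → qp (q ^ 2) (q ^ 2) (k + (k - s)) / qp (q ^ 2) (q ^ 2) (k - s) =
      f.eval (((q ^ 2)⁻¹) ^ s) := by
    intro s hs
    rw [add_comm k, qp_add, mul_div_cancel_left₀ _ (qp_ne _ hp _), hfe]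
    unfold qp
    apply Finset.prod_congr rfl; intro j _
    obtain ⟨c, rfl⟩ := Nat.exists_eq_add_of_le hs
    rw [Nat.add_sub_cancel_left, show s + c + 1 + j = (1 + c + j) + s by ring, pow_add _ _ s,
      mul_assoc _ ((q ^ 2) ^ s), ← mul_pow, mul_inv_cancel₀ hp0]
    ring
  set F : ℕ → ℕ → ℂ := fun r u =>
      (qp (((q ^ 2)⁻¹) ^ k) (q ^ 2) r / qp (q ^ 2) (q ^ 2) r * ((q ^ 2) ^ k) ^ r) *
      (qp (((q ^ 2)⁻¹) ^ k) (q ^ 2) u / qp (q ^ 2) (q ^ 2) u * ((q ^ 2) ^ (k + 1)) ^ u) *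
        f.eval (((q ^ 2)⁻¹) ^ (r + u)) with hF
  have h1 : ∑ r ∈ Finset.range (k + 1), ∑ u ∈ Finset.range (k + 1), F r u =
      ∑ s ∈ Finset.range (k + 1), ∑ r ∈ Finset.range (s + 1), F r (s - r) := by
    rw [Finset.sum_range_diag_flip]
    apply Finset.sum_congr rfl; intro r hr
    symm
    apply Finset.sum_subset
    · intro u; simp; omega
    · intro u hu hu'
      simp only [Finset.mem_range] at hr hu hu'
      simp only [hF]
      apply mul_eq_zero_of_right
      rw [hfe]
      apply Finset.prod_eq_zero (i := r + u - (k + 1)) (by simp; omega)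
      rw [show k + 1 + (r + u - (k + 1)) = r + u by omega, ← mul_pow, mul_inv_cancel₀ hp0]; simp
  rw [h1]
  apply Finset.sum_congr rfl; intro s hs
  have hs : s ≤ k := by simpa [Nat.lt_succ_iff] using hs
  rw [show k + 1 - 1 - s = k - s by omega, hq2 s hs, hb, (hC _ _ _).2 q hq0, Nat.sub_sub_self hs,
    Finset.mul_sum]
  apply Finset.sum_congr rfl; intro r hr
  have hr : r ≤ s := by simpa [Nat.lt_succ_iff] using hr
  obtain ⟨u, rfl⟩ := Nat.exists_eq_add_of_le hr
  simp only [hF, Nat.add_sub_cancel_left]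
  have hz : q ^ ((2 * (k : ℤ) + 1) * ((k : ℤ) - ((k - (r + u) : ℕ) : ℤ))) *
      q ^ (((r + u : ℕ) : ℤ) - 2 * r) = ((q ^ 2) ^ k) ^ r * ((q ^ 2) ^ (k + 1)) ^ u := by
    rw [← zpow_add₀ hq0, ← pow_mul, ← pow_mul, ← pow_mul, ← pow_mul, ← pow_add, ← zpow_natCast]
    congr 1
    push_cast [Nat.cast_sub hs]
    ring
  linear_combination (f.eval (((q ^ 2)⁻¹) ^ (r + u)) *
    (qp (((q ^ 2)⁻¹) ^ k) (q ^ 2) r / qp (q ^ 2) (q ^ 2) r) *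
      (qp (((q ^ 2)⁻¹) ^ k) (q ^ 2) u / qp (q ^ 2) (q ^ 2) u)) * hz

theorem term0 (q : ℂ) (hq0 : q ≠ 0) (hp : ∀ j : ℕ, (q ^ 2) ^ (j + 1) ≠ 1)
    (C : ℂ → ℂ → ℕ → Polynomial ℂ) (hC : IsUltra C) (N : ℕ) :
    q ^ N * (qp (q ^ 2) (q ^ 2) N / qp (q ^ 4) (q ^ 2) N) *
      (C (q ^ 2) (q ^ 2) N).eval ((q + q⁻¹) / 2) = 1 := by
  rw [(hC _ _ _).2 q hq0]
  have h1 : ∀ r, q ^ N * (qp (q ^ 2) (q ^ 2) r * qp (q ^ 2) (q ^ 2) (N - r) /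
      (qp (q ^ 2) (q ^ 2) r * qp (q ^ 2) (q ^ 2) (N - r)) * q ^ ((N : ℤ) - 2 * r)) =
      q ^ (2 * ((N : ℤ) - r)) := by
    intro r
    rw [div_self (mul_ne_zero (qp_ne _ hp _) (qp_ne _ hp _)), one_mul, ← zpow_natCast,
      ← zpow_add₀ hq0]
    congr 1; ring
  rw [mul_right_comm, Finset.mul_sum]
  simp only [h1]
  rw [← Finset.sum_range_reflect]
  have h2 : ∑ j ∈ Finset.range (N + 1), q ^ (2 * ((N : ℤ) - ((N + 1 - 1 - j : ℕ) : ℤ))) =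
      ∑ j ∈ Finset.range (N + 1), (q ^ 2) ^ j := by
    apply Finset.sum_congr rfl; intro j hj
    have hj : j ≤ N := by simpa [Nat.lt_succ_iff] using hj
    rw [← pow_mul, ← zpow_natCast]
    congr 1
    rw [show N + 1 - 1 - j = N - j by omega]
    push_cast [Nat.cast_sub hj]; ring
  have h3 := geom_sum_mul_neg (q ^ 2) (N + 1)
  have h4 := qp_succ' (q ^ 2) (q ^ 2) N
  have h5 := qp_succ_left (q ^ 2) (q ^ 2) N
  have h6 := qp_ne _ hp (N + 1)
  rw [show q ^ 2 * q ^ 2 = q ^ 4 by ring] at h5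
  have h7 : qp (q ^ 4) (q ^ 2) N ≠ 0 := by
    intro h; rw [h, mul_zero] at h5; exact h6 h5
  have h8 : 1 - q ^ 2 ≠ 0 := by
    intro h; rw [h, zero_mul] at h5; exact h6 h5
  rw [h2, ← mul_div_assoc, div_eq_one_iff_eq h7]
  apply mul_left_cancel₀ h8
  rw [← h5, h4]
  linear_combination qp (q ^ 2) (q ^ 2) N * h3

/-- the column sums of `P_n` at `(q+q⁻¹)/2` equal one. -/
theorem stmt11 (q : ℝ) (hq0 : 0 < q) (hq1 : q < 1) (L : ℕ)
    (C : ℂ → ℂ → ℕ → Polynomial ℂ) (hC : IsUltra C) (n : ℕ) (m : Fin (L + 1)) :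
    ∑ k : Fin (L + 1), evP (q : ℂ) L C n (((q : ℂ) + (q : ℂ)⁻¹) / 2) k m = 1 := by
  have hQ0 : (q : ℂ) ≠ 0 := by exact_mod_cast hq0.ne'
  have hp : ∀ j : ℕ, ((q : ℂ) ^ 2) ^ (j + 1) ≠ 1 := by
    intro j h
    have h' : (q ^ 2) ^ (j + 1) = 1 := by exact_mod_cast h
    rw [← pow_mul] at h'
    exact (pow_lt_one₀ hq0.le hq1 (by omega)).ne h'
  generalize (q : ℂ) = Q at *
  obtain ⟨m, hm⟩ := m
  let G : ℕ → ℂ := fun k => (-1 : ℂ) ^ k *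
            Q ^ ((n : ℤ) +
                ((m : ℕ) : ℤ) * (2 * (k : ℤ) + 1) + 2 * (k : ℤ) * ((L : ℤ) + (n : ℤ) + 1) -
                (k : ℤ) ^ 2) *
            (qp (Q ^ 2) (Q ^ 2) k /
              (qp (Q ^ 2) (Q ^ 2) (2 * k))) *
            (qp (Q ^ (-(2 * (L : ℤ)))) (Q ^ 2) k *
                qp (Q ^ (-(2 * ((m : ℕ) : ℤ) + 2 * (n : ℤ)))) (Q ^ 2) k /
              (qp (Q ^ 2) (Q ^ 2) k * qp (Q ^ (2 * (L : ℤ) + 4)) (Q ^ 2) k)) *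
            (qp (Q ^ 2) (Q ^ 2) (n + (m : ℕ) - k) /
              qp (Q ^ (4 * (k : ℤ) + 4)) (Q ^ 2) (n + (m : ℕ) - k)) *
            qRacah (Q ^ 2) 1 1 (Q ^ (-(2 * (n : ℤ) + 2 * ((m : ℕ) : ℤ) + 2)))
              (Q ^ (-(2 * (L : ℤ) + 2))) k (m : ℕ) *
          (C (Q ^ 2) (Q ^ (2 * (k : ℤ) + 2)) (n + (m : ℕ) - k)).eval ((Q + Q⁻¹) / 2)
  let H : ℕ → ℕ → ℂ := fun k i => Q ^ ((2 * (k : ℤ) + 1) * ((k : ℤ) - (i : ℤ))) *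
      (qp (Q ^ 2) (Q ^ 2) (k + i) / qp (Q ^ 2) (Q ^ 2) i) *
      (C (Q ^ 2) (Q ^ (-(2 * (k : ℤ)))) (k - i)).eval ((Q + Q⁻¹) / 2)
  have e1 : ∀ i : Fin (L + 1), evP Q L C n ((Q + Q⁻¹) / 2) i ⟨m, hm⟩ =
      ∑ k ∈ Finset.Icc (i : ℕ) (min L (n + m)), G k * H k i := by
    intro i
    simp only [evP, Pm, Matrix.map_apply, Matrix.of_apply, Polynomial.eval_finsetSum,
      Polynomial.eval_mul, Polynomial.eval_C]
    apply Finset.sum_congr rfl; intro k _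
    simp only [G, H]
    rw [show (n : ℤ) + (2 * (k : ℤ) + 1) * ((k : ℤ) - ((i : ℕ) : ℤ)) +
                (m : ℤ) * (2 * (k : ℤ) + 1) + 2 * (k : ℤ) * ((L : ℤ) + (n : ℤ) + 1) -
                (k : ℤ) ^ 2 = ((n : ℤ) +
                (m : ℤ) * (2 * (k : ℤ) + 1) + 2 * (k : ℤ) * ((L : ℤ) + (n : ℤ) + 1) -
                (k : ℤ) ^ 2) + (2 * (k : ℤ) + 1) * ((k : ℤ) - ((i : ℕ) : ℤ)) by ring,
      zpow_add₀ hQ0, mul_div_mul_comm (qp (Q ^ 2) (Q ^ 2) k) (qp (Q ^ 2) (Q ^ 2) (k + i))]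
    ring
  simp only [e1]
  rw [← Finset.sum_range (fun i => ∑ k ∈ Finset.Icc i (min L (n + m)), G k * H k i)]
  rw [Finset.sum_comm' (s' := fun k => Finset.range (k + 1))
    (t' := Finset.range (min L (n + m) + 1)) (by intro x y; simp; omega)]
  simp only [← Finset.mul_sum]
  rw [Finset.sum_eq_single 0]
  · have h := term0 Q hQ0 hp C hC (n + m)
    have hc : ∀ p β : ℂ, (C p β 0).eval ((Q + Q⁻¹) / 2) = 1 := by
      intro p β; rw [(hC p β 0).2 Q hQ0]; simp [qp]
    have hz : Q ^ ((n : ℤ) + (m : ℤ)) = Q ^ (n + m) := by exact_mod_cast zpow_natCast Q (n + m)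
    have h2 : Q ^ (2 : ℤ) = Q ^ 2 := by norm_cast
    have h4 : Q ^ (4 : ℤ) = Q ^ 4 := by norm_cast
    have hz0 : ∀ a b : ℂ, qp a b 0 = 1 := by intro a b; simp [qp]
    simp [G, H, hc, qRacah, hz, h2, h4, hz0]
    exact h
  · intro k _ hk
    have := key Q hQ0 hp C hC k (Nat.pos_of_ne_zero hk)
    simp only [H]
    rw [this, mul_zero]
  · simp

end
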